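/- arXiv:1406.3049 — 7 statements merged into one kernel-verified Lean document; each statement's English description precedes it below -/
import Mathlib

section
/- Let V be a real inner product space, k ≥ 4 an even integer, and let v_1, …, v_k ∈ V satisfy: ⟪v_i, v_i⟫ = 2 for all i; ⟪v_i, v_{i+1}⟫ = ε_i with ε_i ∈ {1, −1} for all i (indices cyclic modulo k); and ⟪v_i, v_j⟫ = 0 for every non-cyclically-adjacent pair i ≠ j. If v_1, …, v_k are linearly independent, then there exist indices i and j with ε_i = −1 and ε_j = +1 (i.e., the cycle contains at least one solid edge and at least one dotted edge). -/
/-!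
Starting from `c 0 = 1`, propagate a sign around the cycle by `c (i + 1) = -ε i * c i`. If the
number of dotted edges is even, then `∏ i, -ε i = 1`, so the signs match up when the cycle closes.
All edges between the rescaled vectors `c i • v i` are then solid, and
`‖∑ i, c i • v i‖ ^ 2 = ∑ i, (2 * c i ^ 2 - 2 * c i ^ 2) = 0` is a linear relation.
Hence independence forces an odd number of dotted edges: there is at least one, and in an even
cycle they cannot be all of the edges.
-/

open RealInnerProductSpace

/-- Orthogonality of all pairs of distinct vectors that are not neighbours in the cyclic order on
`ZMod k`: the graph of nonzero inner products is contained in a `k`-cycle. -/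
def CyclicallyOrthogonal {V : Type*} [SeminormedAddCommGroup V] [InnerProductSpace ℝ V] {k : ℕ}
    (v : ZMod k → V) : Prop :=
  ∀ i j : ZMod k, i ≠ j → j ≠ i + 1 → i ≠ j + 1 → ⟪v i, v j⟫ = (0 : ℝ)

namespace CyclicallyOrthogonal

variable {V : Type*} [SeminormedAddCommGroup V] [InnerProductSpace ℝ V] {k : ℕ} {v : ZMod k → V}

theorem smul (hv : CyclicallyOrthogonal v) (c : ZMod k → ℝ) :
    CyclicallyOrthogonal fun i ↦ c i • v i := by
  intro i j hij hj hi
  rw [real_inner_smul_left, real_inner_smul_right, hv i j hij hj hi, mul_zero, mul_zero]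

theorem inner_sum_eq [NeZero k] (hv : CyclicallyOrthogonal v) (hk : 3 ≤ k) (i : ZMod k) :
    ⟪v i, ∑ j, v j⟫ = ⟪v i, v i⟫ + ⟪v i, v (i + 1)⟫ + ⟪v i, v (i - 1)⟫ := by
  have : Fact (1 < k) := ⟨by lia⟩
  have : Fact (2 < k) := ⟨hk⟩
  have self_notMem : i ∉ ({i + 1, i - 1} : Finset (ZMod k)) := by simp [eq_sub_iff_add_eq]
  have next_ne_prev : i + 1 ≠ i - 1 := fun h ↦
    ZMod.neg_one_ne_one (n := k) (by linear_combination -h)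
  have vanish (j : ZMod k) (hj : j ∉ ({i, i + 1, i - 1} : Finset (ZMod k))) :
      ⟪v i, v j⟫ = (0 : ℝ) := by
    simp only [Finset.mem_insert, Finset.mem_singleton, not_or, eq_sub_iff_add_eq] at hj
    exact hv i j (Ne.symm hj.1) hj.2.1 (Ne.symm hj.2.2)
  rw [inner_sum, ← Finset.sum_subset (Finset.subset_univ {i, i + 1, i - 1}) fun j _ ↦ vanish j,
    Finset.sum_insert self_notMem, Finset.sum_pair next_ne_prev, add_assoc]

theorem inner_sum_sum_eq [NeZero k] (hv : CyclicallyOrthogonal v) (hk : 3 ≤ k) :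
    ⟪∑ i, v i, ∑ i, v i⟫ = ∑ i, (⟪v i, v i⟫ + 2 * ⟪v i, v (i + 1)⟫) := by
  have reindex : ∑ i, ⟪v i, v (i - 1)⟫ = ∑ i, ⟪v i, v (i + 1)⟫ := by
    rw [← Equiv.sum_comp (Equiv.addRight 1) fun i ↦ ⟪v i, v (i - 1)⟫]
    simp [real_inner_comm]
  simp only [sum_inner, hv.inner_sum_eq hk, Finset.sum_add_distrib, reindex, ← Finset.mul_sum]
  ring

end CyclicallyOrthogonal

theorem prod_range_natCast_zmod {M : Type*} [CommMonoid M] {k : ℕ} [NeZero k] (u : ZMod k → M) :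
    ∏ n ∈ Finset.range k, u n = ∏ i, u i := by
  refine Finset.prod_nbij' (fun n ↦ (n : ZMod k)) ZMod.val ?_ ?_ ?_ ?_ ?_
  · simp
  · simp [ZMod.val_lt]
  · simpa using fun n ↦ ZMod.val_cast_of_lt
  · simp
  · simp

theorem exists_zmod_add_one_eq_mul_of_prod_eq_one {M : Type*} [CommMonoid M] {k : ℕ} [NeZero k]
    {u : ZMod k → M} (hu : ∏ i, u i = 1) :
    ∃ c : ZMod k → M, c 0 = 1 ∧ ∀ i, c (i + 1) = u i * c i := by
  let C (n : ℕ) : M := ∏ m ∈ Finset.range n, u m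
  have periodic : Function.Periodic C k := fun n ↦ by
    simp only [C, add_comm n k, Finset.prod_range_add, prod_range_natCast_zmod, hu, one_mul,
      Nat.cast_add, ZMod.natCast_self, zero_add]
  refine ⟨fun i ↦ C i.val, by simp [C], fun i ↦ ?_⟩
  calc C (i + 1).val
      = C ((i.val + 1 : ℕ) : ZMod k).val := by simp
    _ = C (i.val + 1) := by rw [ZMod.val_natCast, periodic.map_mod_nat]
    _ = u i * C i.val := by simp [C, Finset.prod_range_succ_comm]

theorem prod_neg_eq_neg_one_pow_ncard {ι R : Type*} [Fintype ι] [CommMonoid R] [HasDistribNeg R]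
    {ε : ι → R} (hε : ∀ i, ε i = 1 ∨ ε i = -1) : ∏ i, -ε i = (-1) ^ {i | ε i = 1}.ncard := by
  classical
  have neg_eq_ite (i : ι) : -ε i = if ε i = 1 then -1 else 1 := by
    split_ifs with h
    · rw [h]
    · rw [(hε i).resolve_left h, neg_neg]
  simp_rw [neg_eq_ite, Finset.prod_ite, Finset.prod_const, one_pow, mul_one,
    Set.ncard_eq_toFinset_card', Set.toFinset_ofPred]

theorem exists_eq_neg_one_and_exists_eq_one_of_odd_ncard {ι R : Type*} [One R] [Neg R]
    {ε : ι → R} (hε : ∀ i, ε i = 1 ∨ ε i = -1) (hι : Even (Nat.card ι))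
    (hodd : Odd {i | ε i = 1}.ncard) : (∃ i, ε i = -1) ∧ ∃ j, ε j = 1 := by
  refine ⟨?_, Set.nonempty_of_ncard_ne_zero hodd.pos.ne'⟩
  by_contra! h
  have all_one : {i | ε i = 1} = Set.univ :=
    Set.eq_univ_of_forall fun i ↦ (hε i).resolve_right (h i)
  rw [all_one, Set.ncard_univ] at hodd
  exact Nat.not_even_iff_odd.2 hodd hι

section Cycle

variable {V : Type*} [NormedAddCommGroup V] [InnerProductSpace ℝ V] {k : ℕ} [NeZero k]
  {v : ZMod k → V} {ε : ZMod k → ℝ}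

theorem not_linearIndependent_of_prod_neg_eq_one (hk : 3 ≤ k) (hε : ∀ i, ε i = 1 ∨ ε i = -1)
    (hdiag : ∀ i, ⟪v i, v i⟫ = (2 : ℝ)) (hadj : ∀ i, ⟪v i, v (i + 1)⟫ = ε i)
    (horth : CyclicallyOrthogonal v) (hprod : ∏ i, -ε i = 1) : ¬ LinearIndependent ℝ v := by
  intro hli
  obtain ⟨c, hc_zero, hc_succ⟩ := exists_zmod_add_one_eq_mul_of_prod_eq_one hprod
  have cancel (i : ZMod k) :
      ⟪c i • v i, c i • v i⟫ + 2 * ⟪c i • v i, c (i + 1) • v (i + 1)⟫ = 0 := by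
    have hε_sq : ε i ^ 2 = 1 := sq_eq_one_iff.2 (hε i)
    simp only [real_inner_smul_left, real_inner_smul_right, hdiag, hadj, hc_succ]
    linear_combination -2 * c i ^ 2 * hε_sq
  have relation : ∑ i, c i • v i = 0 := by
    rw [← inner_self_eq_zero (𝕜 := ℝ), (horth.smul c).inner_sum_sum_eq hk]
    exact Finset.sum_eq_zero fun i _ ↦ cancel i
  have : c 0 = 0 := Fintype.linearIndependent_iff.1 hli c relation 0
  exact one_ne_zero (hc_zero.symm.trans this)

theorem cycle_has_solid_and_dotted_edge_general (hk : 3 ≤ k) (hε : ∀ i, ε i = 1 ∨ ε i = -1)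
    (hdiag : ∀ i, ⟪v i, v i⟫ = (2 : ℝ)) (hadj : ∀ i, ⟪v i, v (i + 1)⟫ = ε i)
    (horth : ∀ i j : ZMod k, i ≠ j → j ≠ i + 1 → i ≠ j + 1 → ⟪v i, v j⟫ = (0 : ℝ))
    (hli : LinearIndependent ℝ v) : Odd {i | ε i = 1}.ncard := by
  by_contra h
  refine not_linearIndependent_of_prod_neg_eq_one hk hε hdiag hadj horth ?_ hli
  rw [prod_neg_eq_neg_one_pow_ncard hε, (Nat.not_odd_iff_even.1 h).neg_one_pow]

end Cycle

/-- In an even cycle of linearly independent roots, where consecutive roots have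
inner product ±1 (solid edge: −1, dotted edge: +1) and non-adjacent roots are
orthogonal, there is at least one solid edge and at least one dotted edge. -/
theorem cycle_has_solid_and_dotted_edge
    {V : Type*} [NormedAddCommGroup V] [InnerProductSpace ℝ V]
    (k : ℕ) (hk : 4 ≤ k) (hkeven : Even k) [NeZero k]
    (v : ZMod k → V) (ε : ZMod k → ℝ)
    (hε : ∀ i, ε i = 1 ∨ ε i = -1)
    (hdiag : ∀ i, ⟪v i, v i⟫ = (2 : ℝ))
    (hadj : ∀ i, ⟪v i, v (i + 1)⟫ = ε i)
    (horth : ∀ i j : ZMod k, i ≠ j → j ≠ i + 1 → i ≠ j + 1 → ⟪v i, v j⟫ = (0 : ℝ))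
    (hli : LinearIndependent ℝ v) :
    (∃ i, ε i = -1) ∧ (∃ j, ε j = 1) :=
  exists_eq_neg_one_and_exists_eq_one_of_odd_ncard hε (by rwa [Nat.card_zmod])
    (cycle_has_solid_and_dotted_edge_general (by lia) hε hdiag hadj horth hli)
end

section
/- Let V be a real inner product space and v_1, …, v_n ∈ V. Let G be the graph on vertex set {1, …, n} with an edge {i, j} (i ≠ j) exactly when ⟪v_i, v_j⟫ ≠ 0. If G is acyclic (a forest), then there exist signs ε_1, …, ε_n ∈ {1, −1} such that ⟪ε_i v_i, ε_j v_j⟫ ≤ 0 for all i ≠ j. -/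
open RealInnerProductSpace

/-!
On a forest, the product of signs along the path from a chosen root of each component labels the
vertices so that two adjacent labels differ exactly by the sign of their edge. Giving an edge the
sign `-1` when its inner product is positive and `1` otherwise, these labels are the required `ε`.
-/

section Potential

variable {α M : Type*} {G : SimpleGraph α} {s : α → α → M}

/-- The holonomy of a walk for the edge weighting `s`: the product, in order, of the weights of the
traversed edges. The weighting is a function on all pairs of vertices, evaluated only at the
adjacent ones. -/
def walkProd [Monoid M] (s : α → α → M) {u v : α} (p : G.Walk u v) : M :=
  (p.darts.map fun d => s d.fst d.snd).prod

lemma walkProd_concat [Monoid M] {r u v : α} (p : G.Walk r u) (h : G.Adj u v) :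
    walkProd s (p.concat h) = walkProd s p * s u v := by
  simp [walkProd, SimpleGraph.Walk.darts_concat]

lemma walkProd_eq_mul_of_isPath_of_adj [Group M] (hG : G.IsAcyclic)
    (hs : ∀ u v, G.Adj u v → s v u = (s u v)⁻¹) {r u v : α} {p : G.Walk r u} {q : G.Walk r v}
    (hp : p.IsPath) (hq : q.IsPath) (h : G.Adj u v) :
    walkProd s q = walkProd s p * s u v := by
  by_cases hv : v ∈ p.support
  · have p_eq : p = q.concat h.symm := hG.path_concat hq hp h.symm hv
    rw [p_eq, walkProd_concat, hs u v h, inv_mul_cancel_right]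
  · have q_eq : q = p.concat h :=
      Subtype.mk.inj ((hG.subsingleton_path r v).elim ⟨q, hq⟩ ⟨p.concat h, hp.concat hv h⟩)
    rw [q_eq, walkProd_concat]

theorem exists_potential_of_isAcyclic [Group M] (hG : G.IsAcyclic)
    (hs : ∀ u v, G.Adj u v → s v u = (s u v)⁻¹) :
    ∃ f : α → M, ∀ u v, G.Adj u v → f v = f u * s u v := by
  have exists_path (c : G.ConnectedComponent) (v : α) (hv : G.connectedComponentMk v = c) :
      ∃ p : G.Walk c.out v, p.IsPath :=
    (SimpleGraph.ConnectedComponent.exact (c.out_eq.trans hv.symm)).exists_isPath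
  choose p hp using exists_path
  refine ⟨fun v => walkProd s (p _ v rfl), fun u v h => ?_⟩
  have same_component : G.connectedComponentMk v = G.connectedComponentMk u :=
    SimpleGraph.ConnectedComponent.sound h.symm.reachable
  have indep_of_component {c : G.ConnectedComponent} (hv : G.connectedComponentMk v = c) :
      walkProd s (p _ v rfl) = walkProd s (p c v hv) := by
    subst hv
    rfl
  calc walkProd s (p _ v rfl) = walkProd s (p _ v same_component) :=
      indep_of_component same_component
    _ = walkProd s (p _ u rfl) * s u v :=
      walkProd_eq_mul_of_isPath_of_adj hG hs (hp _ u rfl) (hp _ v same_component) h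

end Potential

theorem exists_units_smul_nonpos_of_isAcyclic {ι R : Type*} [AddCommGroup R] [LinearOrder R]
    [IsOrderedAddMonoid R] {A : Matrix ι ι R} (hA : A.IsSymm)
    (hacyclic : (SimpleGraph.fromRel fun i j => A i j ≠ 0).IsAcyclic) :
    ∃ ε : ι → ℤˣ, ∀ i j, i ≠ j → (ε i * ε j) • A i j ≤ 0 := by
  let s (i j : ι) : ℤˣ := if 0 < A i j then -1 else 1
  have s_smul_nonpos (i j : ι) : s i j • A i j ≤ 0 := by
    by_cases hpos : 0 < A i j
    · simpa only [s, if_pos hpos, Units.neg_smul, one_smul, neg_nonpos] using hpos.le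
    · simpa only [s, if_neg hpos, one_smul] using not_lt.mp hpos
  have s_symm (i j : ι) : s j i = (s i j)⁻¹ := by
    simp only [s, hA.apply, Int.units_inv_eq_self]
  obtain ⟨ε, hε⟩ := exists_potential_of_isAcyclic hacyclic fun i j _ => s_symm i j
  refine ⟨ε, fun i j hij => ?_⟩
  by_cases h0 : A i j = 0
  · rw [h0, smul_zero]
  · have ε_mul_ε : ε i * ε j = s i j := by
      rw [hε i j ((SimpleGraph.fromRel_adj _ _ _).2 ⟨hij, Or.inl h0⟩), ← mul_assoc,
        Int.units_mul_self, one_mul]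
    simpa only [ε_mul_ε] using s_smul_nonpos i j

theorem forest_admits_nonpositive_signs_general
    {ι V : Type*} [SeminormedAddCommGroup V] [InnerProductSpace ℝ V] (v : ι → V)
    (hacyclic : (SimpleGraph.fromRel (fun i j : ι => ⟪v i, v j⟫ ≠ (0 : ℝ))).IsAcyclic) :
    ∃ ε : ι → ℝ, (∀ i, ε i = 1 ∨ ε i = -1) ∧
      ∀ i j : ι, i ≠ j → ⟪ε i • v i, ε j • v j⟫ ≤ (0 : ℝ) := by
  have gram_symm : (Matrix.gram ℝ v).IsSymm := .ext fun i j => real_inner_comm _ _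
  obtain ⟨ε, hε⟩ := exists_units_smul_nonpos_of_isAcyclic gram_symm hacyclic
  refine ⟨fun i => ((ε i : ℤ) : ℝ), fun i => ?_, fun i j hij => ?_⟩
  · rcases Int.units_eq_one_or (ε i) with h | h <;> simp [h]
  · calc ⟪((ε i : ℤ) : ℝ) • v i, ((ε j : ℤ) : ℝ) • v j⟫ = (ε i * ε j) • ⟪v i, v j⟫ := by
          simp [Units.smul_def, real_inner_smul_left, real_inner_smul_right, mul_left_comm,
            mul_assoc]
      _ ≤ 0 := hε i j hij

/-- If the diagram of a family of vectors (edges between non-orthogonal pairs) is a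
forest, then after suitable sign changes (similarity transformations) all pairwise
inner products can be made non-positive. -/
theorem forest_admits_nonpositive_signs
    {V : Type*} [NormedAddCommGroup V] [InnerProductSpace ℝ V]
    (n : ℕ) (v : Fin n → V)
    (hacyclic : (SimpleGraph.fromRel (fun i j : Fin n => ⟪v i, v j⟫ ≠ (0 : ℝ))).IsAcyclic) :
    ∃ ε : Fin n → ℝ, (∀ i, ε i = 1 ∨ ε i = -1) ∧
      ∀ i j : Fin n, i ≠ j → ⟪ε i • v i, ε j • v j⟫ ≤ (0 : ℝ) :=
  forest_admits_nonpositive_signs_general v hacyclic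
end

section
/- Let n ≥ 1 and k ≥ 4, and let v_1, …, v_k be elements of Φ(A_n) such that ⟪v_i, v_{i+1}⟫ ≠ 0 for all i (indices cyclic modulo k, so also ⟪v_k, v_1⟫ ≠ 0) and ⟪v_i, v_j⟫ = 0 for every non-cyclically-adjacent pair i ≠ j. Then v_1, …, v_k are linearly dependent. In other words, the root system A_n contains no set of linearly independent roots whose orthogonality diagram is a cycle of length ≥ 4. -/
open RealInnerProductSpace

/-- A root of the root system `A_n` inside `ℝ^{n+1}`: a vector of the form `e_i - e_j`
with `i ≠ j`. -/
def IsRootAn (n : ℕ) (x : EuclideanSpace ℝ (Fin (n + 1))) : Prop :=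
  ∃ i j : Fin (n + 1), i ≠ j ∧
    x = EuclideanSpace.single i (1 : ℝ) - EuclideanSpace.single j (1 : ℝ)

/-!
View the root `e_a - e_b` as an edge joining `a` and `b`: two roots fail to be orthogonal exactly
when their edges share an endpoint. In a cycle of roots pick an endpoint `p i` common to `v i` and
`v (i + 1)`. Since `v i` and `v (i + 2)` are orthogonal, `p i ≠ p (i + 1)`, so `v (i + 1)` is
`± (e_{p (i + 1)} - e_{p i})`, and the sum of these differences around the cycle telescopes to zero.
-/

theorem exists_apply_ne_zero_of_inner_ne_zero {𝕜 ι : Type*} [RCLike 𝕜] [Fintype ι]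
    {x y : EuclideanSpace 𝕜 ι} (h : inner 𝕜 x y ≠ 0) : ∃ p, x p ≠ 0 ∧ y p ≠ 0 := by
  contrapose! h
  rw [PiLp.inner_apply]
  refine Finset.sum_eq_zero fun p _ => ?_
  obtain hx | hx := eq_or_ne (x p) 0
  · rw [hx, inner_zero_left]
  · rw [h p hx, inner_zero_right]

theorem inner_single_sub_single_pos {ι : Type*} [Fintype ι] [DecidableEq ι] {p a b : ι}
    (ha : a ≠ p) (hb : b ≠ p) :
    0 < ⟪EuclideanSpace.single p (1 : ℝ) - EuclideanSpace.single a 1,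
      EuclideanSpace.single p (1 : ℝ) - EuclideanSpace.single b 1⟫ := by
  have inner_eq : ⟪EuclideanSpace.single p (1 : ℝ) - EuclideanSpace.single a 1,
      EuclideanSpace.single p (1 : ℝ) - EuclideanSpace.single b 1⟫ =
      1 + if a = b then 1 else 0 := by
    simp [inner_sub_left, EuclideanSpace.inner_single_left, PiLp.single_apply, ha, hb.symm]
  rw [inner_eq]
  positivity

theorem not_linearIndependent_of_smul_eq_sub_comp_perm {R M ι : Type*} [Ring R] [AddCommGroup M]
    [Module R M] [Finite ι] (σ : Equiv.Perm ι) {v f : ι → M} {s : ι → R} (hs : s ≠ 0)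
    (hsv : ∀ i, s i • v i = f (σ i) - f i) : ¬ LinearIndependent R v := by
  have := Fintype.ofFinite ι
  intro hv
  have sum_eq_zero : ∑ i, s i • v i = 0 := by
    simp only [hsv, Finset.sum_sub_distrib, Equiv.sum_comp σ f, sub_self]
  exact hs (funext (Fintype.linearIndependent_iff.1 hv s sum_eq_zero))

namespace IsRootAn

variable {n : ℕ} {x y : EuclideanSpace ℝ (Fin (n + 1))} {p q : Fin (n + 1)}

theorem exists_smul_eq_single_sub_single (hx : IsRootAn n x) (hp : x p ≠ 0) :
    ∃ s : ℝ, s ≠ 0 ∧ ∃ a ≠ p, s • x = EuclideanSpace.single p 1 - EuclideanSpace.single a 1 := by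
  obtain ⟨i, j, hij, rfl⟩ := hx
  have p_eq : p = i ∨ p = j := by
    contrapose! hp
    simp [hp.1, hp.2]
  obtain rfl | rfl := p_eq
  · exact ⟨1, one_ne_zero, j, hij.symm, one_smul _ _⟩
  · exact ⟨-1, neg_ne_zero.2 one_ne_zero, i, hij, by rw [neg_one_smul, neg_sub]⟩

theorem exists_smul_eq_single_sub_single_of_ne (hx : IsRootAn n x) (hp : x p ≠ 0) (hq : x q ≠ 0)
    (hpq : p ≠ q) :
    ∃ s : ℝ, s ≠ 0 ∧ s • x = EuclideanSpace.single p 1 - EuclideanSpace.single q 1 := by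
  obtain ⟨s, hs, a, -, hsx⟩ := hx.exists_smul_eq_single_sub_single hp
  have q_eq : q = a := by
    by_contra hqa
    have : (s • x) q = 0 := by simp [hsx, hpq.symm, hqa]
    exact mul_ne_zero hs hq this
  exact ⟨s, hs, q_eq ▸ hsx⟩

theorem inner_ne_zero_of_apply_ne_zero (hx : IsRootAn n x) (hy : IsRootAn n y) (hxp : x p ≠ 0)
    (hyp : y p ≠ 0) : ⟪x, y⟫ ≠ 0 := by
  obtain ⟨s, -, a, hap, hsx⟩ := hx.exists_smul_eq_single_sub_single hxp
  obtain ⟨t, -, b, hbp, hty⟩ := hy.exists_smul_eq_single_sub_single hyp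
  intro hxy
  have smul_inner_eq_zero : ⟪s • x, t • y⟫ = 0 := by
    rw [real_inner_smul_left, real_inner_smul_right, hxy, mul_zero, mul_zero]
  rw [hsx, hty] at smul_inner_eq_zero
  exact (inner_single_sub_single_pos hap hbp).ne' smul_inner_eq_zero

end IsRootAn

theorem An_no_cycles_of_length_ge_four_general {n : ℕ} {ι : Type*} [Finite ι] [Nonempty ι]
    (σ : Equiv.Perm ι) {v : ι → EuclideanSpace ℝ (Fin (n + 1))} (hroot : ∀ i, IsRootAn n (v i))
    (hadj : ∀ i, ⟪v i, v (σ i)⟫ ≠ 0) (horth : ∀ i, ⟪v i, v (σ (σ i))⟫ = 0) :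
    ¬ LinearIndependent ℝ v := by
  choose p hp hp' using fun i => exists_apply_ne_zero_of_inner_ne_zero (hadj i)
  have p_ne (i : ι) : p (σ i) ≠ p i := fun h =>
    (hroot i).inner_ne_zero_of_apply_ne_zero (hroot (σ (σ i))) (hp i) (h ▸ hp' (σ i)) (horth i)
  choose s hs hsv using fun i =>
    (hroot (σ i)).exists_smul_eq_single_sub_single_of_ne (hp (σ i)) (hp' i) (p_ne i)
  rw [← linearIndependent_equiv σ]
  exact not_linearIndependent_of_smul_eq_sub_comp_perm σ
    (f := fun i => EuclideanSpace.single (p i) 1)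
    (Function.ne_iff.2 ⟨Classical.arbitrary ι, hs _⟩) hsv

/-- The root system `A_n` contains no set of linearly independent roots whose
orthogonality diagram is a cycle of length at least 4. -/
theorem An_no_cycles_of_length_ge_four
    (n k : ℕ) (hn : 1 ≤ n) (hk : 4 ≤ k) [NeZero k]
    (v : ZMod k → EuclideanSpace ℝ (Fin (n + 1)))
    (hroot : ∀ r, IsRootAn n (v r))
    (hadj : ∀ i, ⟪v i, v (i + 1)⟫ ≠ (0 : ℝ))
    (horth : ∀ i j : ZMod k, i ≠ j → j ≠ i + 1 → i ≠ j + 1 → ⟪v i, v j⟫ = (0 : ℝ)) :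
    ¬ LinearIndependent ℝ v := by
  have natCast_ne_zero (m : ℕ) (hm : 0 < m) (hmk : m < k) : (m : ZMod k) ≠ 0 := by
    rw [Ne, ZMod.natCast_eq_zero_iff]
    exact Nat.not_dvd_of_pos_of_lt hm hmk
  refine An_no_cycles_of_length_ge_four_general (Equiv.addRight 1) hroot hadj fun i =>
    horth i (i + 1 + 1) (fun h => natCast_ne_zero 2 two_pos (by lia) ?_)
      (fun h => natCast_ne_zero 1 one_pos (by lia) ?_)
      (fun h => natCast_ne_zero 3 three_pos (by lia) ?_)
  · linear_combination -h
  · linear_combination h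
  · linear_combination -h
end

section
/- For every n ≥ 1 there do not exist vectors β_1, …, β_7 ∈ ℝ^n, each of the form ±e_i ± e_j for some 1 ≤ i < j ≤ n, whose Gram matrix (⟪β_r, β_s⟫) equals the Cartan matrix of E_7; and there do not exist vectors β_1, …, β_8 ∈ ℝ^n, each of the form ±e_i ± e_j, whose Gram matrix equals the Cartan matrix of E_8. In other words, the root systems E_7 and E_8 are not contained in the root system D_n. -/
open RealInnerProductSpace

/-- A root of the root system `D_n` inside `ℝ^n`: a vector of the form `±e_i ± e_j`
with `i < j`. -/
def IsRootDn (n : ℕ) (x : EuclideanSpace ℝ (Fin n)) : Prop :=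
  ∃ i j : Fin n, i < j ∧
    (x = EuclideanSpace.single i (1 : ℝ) + EuclideanSpace.single j (1 : ℝ) ∨
     x = EuclideanSpace.single i (1 : ℝ) - EuclideanSpace.single j (1 : ℝ) ∨
     x = -EuclideanSpace.single i (1 : ℝ) + EuclideanSpace.single j (1 : ℝ) ∨
     x = -EuclideanSpace.single i (1 : ℝ) - EuclideanSpace.single j (1 : ℝ))

/-- The Cartan matrix of `E₇` (Bourbaki numbering). -/
def cartanE7 : Matrix (Fin 7) (Fin 7) ℝ :=
  !![ 2,  0, -1,  0,  0,  0,  0;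
      0,  2,  0, -1,  0,  0,  0;
     -1,  0,  2, -1,  0,  0,  0;
      0, -1, -1,  2, -1,  0,  0;
      0,  0,  0, -1,  2, -1,  0;
      0,  0,  0,  0, -1,  2, -1;
      0,  0,  0,  0,  0, -1,  2]

/-- The Cartan matrix of `E₈` (Bourbaki numbering). -/
def cartanE8 : Matrix (Fin 8) (Fin 8) ℝ :=
  !![ 2,  0, -1,  0,  0,  0,  0,  0;
      0,  2,  0, -1,  0,  0,  0,  0;
     -1,  0,  2, -1,  0,  0,  0,  0;
      0, -1, -1,  2, -1,  0,  0,  0;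
      0,  0,  0, -1,  2, -1,  0,  0;
      0,  0,  0,  0, -1,  2, -1,  0;
      0,  0,  0,  0,  0, -1,  2, -1;
      0,  0,  0,  0,  0,  0, -1,  2]

/-!
An integer vector of squared norm `2` has at most two odd coordinates, and modulo `2` the inner
product of two integer vectors is the number of coordinates at which both are odd. So vectors with
the Gram matrix of `E₆` turn the nodes of its Dynkin diagram into sets of at most two coordinates,
two of which meet oddly exactly when the nodes are adjacent. The sets of the three neighbours of the
trivalent node each contain one of its at most two coordinates, so two of them meet; meeting evenly,
they coincide. Then these two nodes have the same neighbours, which is false in `E₆`. Finally, `E₆`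
is a subdiagram of `E₇` and of `E₈`.
-/

open Finset Matrix

section EvenIntersections

variable {α κ : Type*} [DecidableEq α]

lemma disjoint_or_eq_of_even_card_inter {s t : Finset α} (hs : #s ≤ 2) (ht : #t ≤ 2)
    (hst : Even #(s ∩ t)) : Disjoint s t ∨ s = t := by
  refine or_iff_not_imp_left.2 fun hmeet ↦ ?_
  have hpos : 0 < #(s ∩ t) := by rwa [card_pos, ← not_disjoint_iff_nonempty_inter]
  have htwo : 2 ≤ #(s ∩ t) := Nat.le_of_dvd hpos hst.two_dvd
  exact (eq_of_subset_of_card_le inter_subset_left (hs.trans htwo)).symm.trans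
    (eq_of_subset_of_card_le inter_subset_right (ht.trans htwo))

lemma not_injective_of_even_card_inter [Fintype κ] {c : Finset α} {s : κ → Finset α}
    (hc : #c < Fintype.card κ) (hs : ∀ k, #(s k) ≤ 2) (hcs : ∀ k, (c ∩ s k).Nonempty)
    (hss : Pairwise fun k l ↦ Even #(s k ∩ s l)) : ¬ Function.Injective s := by
  choose f hf using hcs
  obtain ⟨k, -, l, -, hkl, hfkl⟩ := exists_ne_map_eq_of_card_lt_of_maps_to
    (s := univ) (t := c) hc fun k _ ↦ mem_of_mem_inter_left (hf k)
  have hmeet : ¬ Disjoint (s k) (s l) :=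
    not_disjoint_iff.2
      ⟨f k, mem_of_mem_inter_right (hf k), hfkl ▸ mem_of_mem_inter_right (hf l)⟩
  exact fun hinj ↦ hkl <| hinj <|
    (disjoint_or_eq_of_even_card_inter (hs k) (hs l) (hss hkl)).resolve_left hmeet

end EvenIntersections

section OddSupport

variable {ι : Type*} [Fintype ι]

/-- The set of coordinates at which an integer vector is odd, i.e. the support of its reduction
modulo `2`. -/
def oddSupport (x : ι → ℤ) : Finset ι := {i | Odd (x i)}

lemma card_oddSupport_le_dotProduct_self (x : ι → ℤ) : (#(oddSupport x) : ℤ) ≤ x ⬝ᵥ x := by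
  have one_le_sq {a : ℤ} (ha : Odd a) : 1 ≤ a * a := by
    have hne : a ≠ 0 := by rintro rfl; exact Int.not_odd_zero ha
    exact mul_self_pos.2 hne
  calc (#(oddSupport x) : ℤ) = ∑ _i ∈ oddSupport x, 1 := by simp
    _ ≤ ∑ i ∈ oddSupport x, x i * x i :=
      sum_le_sum fun i hi ↦ one_le_sq ((mem_filter_univ i).1 hi)
    _ ≤ x ⬝ᵥ x := sum_le_univ_sum_of_nonneg fun i ↦ mul_self_nonneg (x i)

lemma odd_dotProduct_iff [DecidableEq ι] (x y : ι → ℤ) :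
    Odd (x ⬝ᵥ y) ↔ Odd #(oddSupport x ∩ oddSupport y) := by
  have hmod (a : ℤ) : (a : ZMod 2) = if Odd a then 1 else 0 := by
    split_ifs with ha
    · exact ha.intCast_zmod_two
    · exact (Int.not_odd_iff_even.1 ha).intCast_zmod_two
  have hsum : ((x ⬝ᵥ y : ℤ) : ZMod 2) = #(oddSupport x ∩ oddSupport y) :=
    calc ((x ⬝ᵥ y : ℤ) : ZMod 2) = ∑ i, ((x i * y i : ℤ) : ZMod 2) := Int.cast_sum _ _
      _ = #(oddSupport x ∩ oddSupport y) := by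
        simp only [hmod, Int.odd_mul, oddSupport, ← filter_and, natCast_card_filter]
  rw [← ZMod.intCast_eq_one_iff_odd, hsum, ZMod.natCast_eq_one_iff_odd]

lemma injective_oddSupport_E₆ : Function.Injective fun r ↦ oddSupport (CartanMatrix.E₆ r) := by
  decide

theorem mul_transpose_ne_E₆ (B : Matrix (Fin 6) ι ℤ) : B * Bᵀ ≠ CartanMatrix.E₆ := by
  classical
  intro hB
  have hdot (r s : Fin 6) : B r ⬝ᵥ B s = CartanMatrix.E₆ r s := congr_fun₂ hB r s
  have hodd (r s : Fin 6) :
      Odd #(oddSupport (B r) ∩ oddSupport (B s)) ↔ Odd (CartanMatrix.E₆ r s) := by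
    rw [← odd_dotProduct_iff, hdot]
  have hcard (r : Fin 6) : #(oddSupport (B r)) ≤ 2 := by
    have hdiag : CartanMatrix.E₆ r r = 2 := by decide +revert
    have hle := card_oddSupport_le_dotProduct_self (B r)
    rw [hdot, hdiag] at hle
    exact_mod_cast hle
  have hinj : Function.Injective fun r ↦ oddSupport (B r) := by
    intro r s (hrs : oddSupport (B r) = oddSupport (B s))
    refine injective_oddSupport_E₆ (filter_congr fun t _ ↦ ?_)
    rw [← hodd, ← hodd, hrs]
  -- Indices start at `0`: the trivalent node, Bourbaki's `4`, has index `3`.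
  let neighbour : Fin 3 → Fin 6 := ![1, 2, 4]
  have hneighbour : Function.Injective neighbour := by decide
  have hmeet (k : Fin 3) : (oddSupport (B 3) ∩ oddSupport (B (neighbour k))).Nonempty := by
    have hadj : Odd (CartanMatrix.E₆ 3 (neighbour k)) := by decide +revert
    exact card_pos.1 ((hodd _ _).2 hadj).pos
  have heven : Pairwise fun k l ↦
      Even #(oddSupport (B (neighbour k)) ∩ oddSupport (B (neighbour l))) := by
    intro k l hkl
    have hnonadj : ∀ k l, k ≠ l → ¬ Odd (CartanMatrix.E₆ (neighbour k) (neighbour l)) := by decide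
    exact Nat.not_odd_iff_even.1 <| (hodd _ _).not.2 <| hnonadj k l hkl
  exact not_injective_of_even_card_inter ((hcard 3).trans_lt (by simp))
    (fun k ↦ hcard (neighbour k)) hmeet heven (hinj.comp hneighbour)

lemma exists_mul_transpose_eq_of_inner_eq {m : Type*} {β : m → EuclideanSpace ℝ ι}
    {A : Matrix m m ℤ} (hβ : ∀ r i, ∃ a : ℤ, β r i = a) (hA : ∀ r s, ⟪β r, β s⟫ = (A r s : ℝ)) :
    ∃ B : Matrix m ι ℤ, B * Bᵀ = A := by
  choose B hB using hβ
  refine ⟨of B, ext fun r s ↦ ?_⟩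
  have : ((of B * (of B)ᵀ) r s : ℝ) = A r s := by
    rw [← hA, real_inner_comm]
    simp [PiLp.inner_apply, mul_apply, hB]
  exact_mod_cast this

end OddSupport

lemma IsRootDn.exists_int_apply_eq {n : ℕ} {x : EuclideanSpace ℝ (Fin n)} (hx : IsRootDn n x)
    (k : Fin n) : ∃ a : ℤ, x k = a := by
  have single_apply (i : Fin n) :
      EuclideanSpace.single i (1 : ℝ) k = ((Pi.single i 1 : Fin n → ℤ) k : ℝ) := by
    simp [Pi.single_apply]
  obtain ⟨i, j, -, rfl | rfl | rfl | rfl⟩ := hx <;>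
    simp only [PiLp.add_apply, PiLp.sub_apply, PiLp.neg_apply, single_apply] <;>
    norm_cast <;>
    exact exists_eq'

/-- The integer vectors of squared norm `2` are exactly the roots of `D_n`. -/
theorem E7_E8_not_subset_Dn_general {ι m : Type*} [Fintype ι] {A : Matrix m m ℝ} {f : Fin 6 → m}
    (hA : A.submatrix f f = CartanMatrix.E₆.map (↑)) :
    ¬ ∃ β : m → EuclideanSpace ℝ ι, (∀ r i, ∃ a : ℤ, β r i = a) ∧ ∀ r s, ⟪β r, β s⟫ = A r s := by
  rintro ⟨β, hβ, hG⟩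
  obtain ⟨B, hB⟩ := exists_mul_transpose_eq_of_inner_eq (A := CartanMatrix.E₆)
    (fun r ↦ hβ (f r)) fun r s ↦ (hG (f r) (f s)).trans (congr_fun₂ hA r s)
  exact mul_transpose_ne_E₆ B hB

lemma cartanE7_submatrix :
    cartanE7.submatrix (Fin.castLE (by decide)) (Fin.castLE (by decide)) =
      CartanMatrix.E₆.map (↑) := by
  ext r s
  fin_cases r <;> fin_cases s <;> simp [cartanE7, CartanMatrix.E₆]

lemma cartanE8_submatrix :
    cartanE8.submatrix (Fin.castLE (by decide)) (Fin.castLE (by decide)) =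
      CartanMatrix.E₆.map (↑) := by
  ext r s
  fin_cases r <;> fin_cases s <;> simp [cartanE8, CartanMatrix.E₆]

/-- The root systems `E₇` and `E₈` are not contained in the root system `D_n`. -/
theorem E7_E8_not_subset_Dn (n : ℕ) (hn : 1 ≤ n) :
    (¬ ∃ β : Fin 7 → EuclideanSpace ℝ (Fin n),
      (∀ r, IsRootDn n (β r)) ∧ ∀ r s, ⟪β r, β s⟫ = cartanE7 r s) ∧
    (¬ ∃ β : Fin 8 → EuclideanSpace ℝ (Fin n),
      (∀ r, IsRootDn n (β r)) ∧ ∀ r s, ⟪β r, β s⟫ = cartanE8 r s) :=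
  ⟨fun ⟨β, hβ, hG⟩ ↦ E7_E8_not_subset_Dn_general cartanE7_submatrix
      ⟨β, fun r ↦ (hβ r).exists_int_apply_eq, hG⟩,
    fun ⟨β, hβ, hG⟩ ↦ E7_E8_not_subset_Dn_general cartanE8_submatrix
      ⟨β, fun r ↦ (hβ r).exists_int_apply_eq, hG⟩⟩
end

section
/- For every l ≥ 4 and every k with 1 ≤ k ≤ l − 3, the determinant of the partial Cartan matrix B(l, k) of the Carter diagram D_l(a_k) equals 4. -/
/-- The partial Cartan matrix `B(l, k)` of the Carter diagram `D_l(a_k)`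
(`l ≥ 4`, `1 ≤ k ≤ l - 3`).  The `l` vertices are numbered as follows:
`c₁ = 0`, `c₂ = 1`, `c₃ = 2`, `c₄ = 3`; `pᵢ = 3 + i` for `1 ≤ i ≤ k - 1`;
`qⱼ = k + 2 + j` for `1 ≤ j ≤ l - k - 3`.  The diagonal entries are `2`;
the quadrangle `c₁ c₂ c₃ c₄` has solid edges `c₁c₂`, `c₂c₃`, `c₃c₄` (entry `-1`)
and the dotted edge `c₁c₄` (entry `+1`); a chain of solid edges
`c₂ – p₁ – ⋯ – p_{k-1}` is attached to `c₂`, and a chain of solid edges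
`c₄ – q₁ – ⋯ – q_{l-k-3}` is attached to `c₄`; all other entries vanish. -/
def carterDlak (l k : ℕ) : Matrix (Fin l) (Fin l) ℤ := fun i j =>
  let a := min (i : ℕ) (j : ℕ)
  let b := max (i : ℕ) (j : ℕ)
  if a = b then 2
  else if a = 0 ∧ b = 3 then 1
  else if (a = 0 ∧ b = 1) ∨ (a = 1 ∧ b = 2) ∨ (a = 2 ∧ b = 3) then -1
  else if a = 1 ∧ b = 4 ∧ 2 ≤ k then -1
  else if 4 ≤ a ∧ b = a + 1 ∧ b ≤ k + 2 then -1
  else if a = 3 ∧ b = k + 3 then -1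
  else if k + 3 ≤ a ∧ b = a + 1 then -1
  else 0

/-!
The diagram is realized by roots of `D_l`: the vertex `i` is sent to `e i ± e (f i)`, where `f i`
lies on the way from `i` to `{0, 2}` and the sign is `+` only for `i = 2`. Hence
`B(l, k) = M * Mᵀ`, where `M` has these roots as rows. The graph with edges `{i, f i}` has the
single cycle `0 → 2 → 0`, coming from the roots `e 0 - e 2` and `e 2 + e 0`; one row operation
breaks it and leaves a triangular matrix with determinant `1 - (-1) * 1 = 2`.
-/

open Matrix

section GainIncMatrix

variable {ι R : Type*}

/-- The incidence matrix of the functional graph of `f` with gains `s`: row `i` stands for the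
edge from `i` to `f i` and is the vector `e i + s i • e (f i)`. It expresses a family of roots
`e i ± e j` in coordinates. -/
def gainIncMatrix [DecidableEq ι] [AddMonoidWithOne R] (f : ι → ι) (s : ι → R) : Matrix ι ι R :=
  of fun i => Pi.single i 1 + Pi.single (f i) (s i)

theorem gainIncMatrix_apply [DecidableEq ι] [AddMonoidWithOne R] (f : ι → ι) (s : ι → R)
    (i j : ι) :
    gainIncMatrix f s i j = (if j = i then 1 else 0) + if j = f i then s i else 0 := by
  simp only [gainIncMatrix, of_apply, Pi.add_apply, Pi.single_apply]

theorem gainIncMatrix_mul_transpose_apply [Fintype ι] [DecidableEq ι] [NonAssocSemiring R]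
    (f : ι → ι) (s : ι → R) (i j : ι) :
    (gainIncMatrix f s * (gainIncMatrix f s)ᵀ) i j =
      (if i = j then 1 else 0) + (if i = f j then s j else 0) +
        ((if f i = j then s i else 0) + if f i = f j then s i * s j else 0) := by
  change (Pi.single i 1 + Pi.single (f i) (s i)) ⬝ᵥ gainIncMatrix f s j = _
  simp only [add_dotProduct, single_dotProduct, gainIncMatrix_apply, one_mul, mul_add, mul_ite,
    mul_one, mul_zero]

theorem gainIncMatrix_mul_transpose_apply_self [Fintype ι] [DecidableEq ι] [NonAssocSemiring R]
    {f : ι → ι} (s : ι → R) {i : ι} (hi : f i ≠ i) :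
    (gainIncMatrix f s * (gainIncMatrix f s)ᵀ) i i = 1 + s i * s i := by
  simp [gainIncMatrix_mul_transpose_apply, hi, hi.symm]

theorem det_updateRow_gainIncMatrix_single [Fintype ι] [LinearOrder ι] [CommRing R] {f : ι → ι}
    (s : ι → R) {a : ι} (hf : ∀ i ≠ a, f i < i) :
    ((gainIncMatrix f s).updateRow a (Pi.single a 1)).det = 1 := by
  have triangular : ((gainIncMatrix f s).updateRow a (Pi.single a 1)).IsLowerTriangular := by
    intro i j (hij : i < j)
    obtain rfl | hi := eq_or_ne i a
    · rw [updateRow_self, Pi.single_eq_of_ne hij.ne']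
    · simp [updateRow_ne hi, gainIncMatrix_apply, hij.ne', ((hf i hi).trans hij).ne']
  rw [det_of_isLowerTriangular _ triangular]
  refine Finset.prod_eq_one fun i _ => ?_
  obtain rfl | hi := eq_or_ne i a
  · rw [updateRow_self, Pi.single_eq_same]
  · simp [updateRow_ne hi, gainIncMatrix_apply, (hf i hi).ne']

theorem det_gainIncMatrix_of_two_cycle [Fintype ι] [LinearOrder ι] [CommRing R] {f : ι → ι}
    (s : ι → R) {a : ι} (hf : ∀ i ≠ a, f i < i) (ha : f a ≠ a) (hfa : f (f a) = a) :
    (gainIncMatrix f s).det = 1 - s a * s (f a) := by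
  have row_reduction : gainIncMatrix f s a + (-s a) • gainIncMatrix f s (f a) =
      (1 - s a * s (f a)) • Pi.single a 1 := by
    ext j
    simp only [Pi.add_apply, Pi.smul_apply, gainIncMatrix_apply, hfa, Pi.single_apply, smul_eq_mul]
    split_ifs <;> ring
  rw [← det_updateRow_add_smul_self _ ha.symm (-s a), row_reduction, det_updateRow_smul,
    det_updateRow_gainIncMatrix_single s hf, mul_one]

end GainIncMatrix

/-- The vertex `f i` in the realization of `D_l(a_k)` by the roots `e i ± e (f i)` of `D_l`: the
neighbour of `i` on the way to `{0, 2}`, except that `0` and `2` are sent to each other although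
they are not adjacent. -/
def carterParent (k : ℕ) : ℕ → ℕ
  | 0 => 2
  | 1 => 0
  | 2 => 0
  | 3 => 2
  | i + 4 => if i + 1 = k then 3 else if i = 0 then 1 else i + 3

theorem carterParent_lt_self (k : ℕ) {i : ℕ} (hi : i ≠ 0) : carterParent k i < i := by
  unfold carterParent
  grind

theorem carterParent_lt {l i : ℕ} (k : ℕ) (hl : 4 ≤ l) (hi : i < l) : carterParent k i < l := by
  obtain rfl | h := eq_or_ne i 0
  · exact (by decide : 2 < 4).trans_le hl
  · exact (carterParent_lt_self k h).trans hi

theorem carterParent_ne_self (k i : ℕ) : carterParent k i ≠ i := by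
  obtain rfl | h := eq_or_ne i 0
  · exact two_ne_zero
  · exact (carterParent_lt_self k h).ne

theorem carterParent_left_eq_iff_of_lt {k i j : ℕ} (hij : i < j) :
    carterParent k i = j ↔ i = 0 ∧ j = 2 := by
  unfold carterParent
  grind

theorem carterParent_right_eq_iff_of_lt {k i j : ℕ} (hk : 1 ≤ k) (hij : i < j) (hj : j ≠ 2) :
    carterParent k j = i ↔
      (i = 0 ∧ j = 1) ∨ (i = 2 ∧ j = 3) ∨ (i = 1 ∧ j = 4 ∧ 2 ≤ k) ∨
        (4 ≤ i ∧ j = i + 1 ∧ j ≤ k + 2) ∨ (i = 3 ∧ j = k + 3) ∨ (k + 3 ≤ i ∧ j = i + 1) := by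
  unfold carterParent
  grind

theorem carterParent_eq_carterParent_iff_of_lt {k i j : ℕ} (hij : i < j) :
    carterParent k i = carterParent k j ↔ (i = 0 ∧ j = 3) ∨ (i = 1 ∧ j = 2) := by
  unfold carterParent
  grind

/-- The sign in the root `e i ± e (f i)` of `D_l` attached to the vertex `i` of `D_l(a_k)`. -/
def carterSign (i : ℕ) : ℤ :=
  if i = 2 then 1 else -1

theorem carterSign_mul_self (i : ℕ) : carterSign i * carterSign i = 1 := by
  unfold carterSign
  split_ifs <;> rfl

/-- The matrix whose rows are the roots `e i ± e (f i)` of `D_l` that realize the vertices of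
`D_l(a_k)`. -/
def carterRoots (l k : ℕ) (hl : 4 ≤ l) : Matrix (Fin l) (Fin l) ℤ :=
  gainIncMatrix (fun i => ⟨carterParent k i, carterParent_lt k hl i.2⟩) fun i => carterSign i

theorem det_carterRoots (l k : ℕ) (hl : 4 ≤ l) : (carterRoots l k hl).det = 2 := by
  rw [carterRoots, det_gainIncMatrix_of_two_cycle (a := ⟨0, by omega⟩)]
  · simp [carterParent, carterSign]
  · intro i hi
    exact carterParent_lt_self k fun h => hi (Fin.ext h)
  · simp [carterParent]
  · simp [carterParent]

theorem isSymm_carterDlak (l k : ℕ) : (carterDlak l k).IsSymm := by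
  ext i j
  simp only [transpose_apply, carterDlak, min_comm, max_comm]

theorem carterDlak_apply_self (l k : ℕ) (i : Fin l) : carterDlak l k i i = 2 := by
  simp [carterDlak]

theorem carterRoots_mul_transpose_apply_self (l k : ℕ) (hl : 4 ≤ l) (i : Fin l) :
    (carterRoots l k hl * (carterRoots l k hl)ᵀ) i i = 2 := by
  rw [carterRoots, gainIncMatrix_mul_transpose_apply_self, carterSign_mul_self, one_add_one_eq_two]
  simpa [Fin.ext_iff] using carterParent_ne_self k i

theorem carterDlak_apply_of_lt {l k : ℕ} (hk : 1 ≤ k) {i j : Fin l} (hij : i < j) :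
    carterDlak l k i j =
      if (i : ℕ) = 0 ∧ (j : ℕ) = 3 then 1
      else if (i : ℕ) = 1 ∧ (j : ℕ) = 2 ∨ (j : ℕ) ≠ 2 ∧ carterParent k j = i then -1
      else 0 := by
  have hij' : (i : ℕ) < j := hij
  simp only [carterDlak, min_eq_left hij'.le, max_eq_right hij'.le, hij'.ne, if_false]
  by_cases hj : (j : ℕ) = 2
  · grind
  · simp only [carterParent_right_eq_iff_of_lt hk hij' hj, hj, ne_eq, not_false_eq_true, true_and,
      and_false, false_or, ite_or]

theorem carterRoots_mul_transpose_apply_of_lt {l k : ℕ} (hl : 4 ≤ l) (hk : 1 ≤ k) {i j : Fin l}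
    (hij : i < j) :
    (carterRoots l k hl * (carterRoots l k hl)ᵀ) i j = carterDlak l k i j := by
  have hij' : (i : ℕ) < j := hij
  rw [carterDlak_apply_of_lt hk hij]
  simp only [carterRoots, gainIncMatrix_mul_transpose_apply, Fin.ext_iff, hij'.ne,
    carterParent_left_eq_iff_of_lt hij', carterParent_eq_carterParent_iff_of_lt hij', carterSign]
  by_cases hj : (j : ℕ) = 2
  · -- For `i = 0`, the contributions of `0 → 2` and `2 → 0` cancel.
    simp only [hj, carterParent]
    grind
  · grind [carterParent]

theorem carterRoots_mul_transpose (l k : ℕ) (hl : 4 ≤ l) (hk : 1 ≤ k) :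
    carterRoots l k hl * (carterRoots l k hl)ᵀ = carterDlak l k := by
  ext i j
  obtain hij | rfl | hji := lt_trichotomy i j
  · exact carterRoots_mul_transpose_apply_of_lt hl hk hij
  · rw [carterRoots_mul_transpose_apply_self, carterDlak_apply_self]
  · rw [← (isSymm_mul_transpose_self _).apply, ← (isSymm_carterDlak l k).apply]
    exact carterRoots_mul_transpose_apply_of_lt hl hk hji

/-- The determinant of the partial Cartan matrix of the Carter diagram `D_l(a_k)`
equals `4` for all `l ≥ 4` and `1 ≤ k ≤ l - 3`. -/
theorem det_carterDlak (l k : ℕ) (hl : 4 ≤ l) (hk1 : 1 ≤ k) (hk2 : k ≤ l - 3) :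
    (carterDlak l k).det = 4 := by
  rw [← carterRoots_mul_transpose l k hl hk1, det_mul, det_transpose, det_carterRoots]
  norm_num
end

section
/- Let l ≥ 4, 1 ≤ k ≤ l − 3, and let B = B(l, k) be the partial Cartan matrix of the Carter diagram D_l(a_k), regarded as a matrix over ℚ. Then B is invertible and the diagonal entries of B^{−1} are: (B^{−1})[c_1,c_1] = (B^{−1})[c_3,c_3] = l/4; (B^{−1})[c_2,c_2] = k; (B^{−1})[c_4,c_4] = l − k − 2; (B^{−1})[p_i,p_i] = k − i for 1 ≤ i ≤ k−1; and (B^{−1})[q_j,q_j] = l − k − 2 − j for 1 ≤ j ≤ l−k−3. -/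
/-- The partial Cartan matrix `B(l, k)` of the Carter diagram `D_l(a_k)` over `ℚ`
(`l ≥ 4`, `1 ≤ k ≤ l - 3`).  The `l` vertices are numbered as follows:
`c₁ = 0`, `c₂ = 1`, `c₃ = 2`, `c₄ = 3`; `pᵢ = 3 + i` for `1 ≤ i ≤ k - 1`;
`qⱼ = k + 2 + j` for `1 ≤ j ≤ l - k - 3`.  The diagonal entries are `2`;
the quadrangle `c₁ c₂ c₃ c₄` has solid edges `c₁c₂`, `c₂c₃`, `c₃c₄` (entry `-1`)
and the dotted edge `c₁c₄` (entry `+1`); a chain of solid edges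
`c₂ – p₁ – ⋯ – p_{k-1}` is attached to `c₂`, and a chain of solid edges
`c₄ – q₁ – ⋯ – q_{l-k-3}` is attached to `c₄`; all other entries vanish. -/
def carterDlakQ (l k : ℕ) : Matrix (Fin l) (Fin l) ℚ := fun i j =>
  let a := min (i : ℕ) (j : ℕ)
  let b := max (i : ℕ) (j : ℕ)
  if a = b then 2
  else if a = 0 ∧ b = 3 then 1
  else if (a = 0 ∧ b = 1) ∨ (a = 1 ∧ b = 2) ∨ (a = 2 ∧ b = 3) then -1
  else if a = 1 ∧ b = 4 ∧ 2 ≤ k then -1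
  else if 4 ≤ a ∧ b = a + 1 ∧ b ≤ k + 2 then -1
  else if a = 3 ∧ b = k + 3 then -1
  else if k + 3 ≤ a ∧ b = a + 1 then -1
  else 0

/-!
The matrix `B` is the Gram matrix of `l` roots of `D_l`. Write `l = k + m + 2` and split an
orthonormal basis of `ℚ ^ l` into `ε₀, …, ε_k` and `η₀, …, η_m`. The roots `ε₀ ∓ η₀` at `c₁` and
`c₃`, `ε_{i+1} - ε_i` along the chain of `c₂` and `η_{j+1} - η_j` along the chain of `c₄` realise
the diagram, including its dotted edge. If `R` is the matrix with these rows and `W` the matrix of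
the dual basis, then `B = R Rᵀ` and `R Wᵀ = 1`, hence `B⁻¹ = W Wᵀ`: the diagonal entries of `B⁻¹`
are the squared lengths of the dual weights.
-/

open Matrix

theorem mul_transpose_mul_mul_transpose_eq_one {m n R : Type*} [Fintype m] [DecidableEq m]
    [Fintype n] [CommRing R] {A C : Matrix m n R}
    (hcard : Fintype.card m = Fintype.card n) (h : A * Cᵀ = 1) :
    A * Aᵀ * (C * Cᵀ) = 1 := by
  classical
  have hswap : Aᵀ * C = 1 := by
    simpa using congrArg transpose ((mul_eq_one_comm_of_card_eq m n R hcard).mp h)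
  rw [Matrix.mul_assoc, ← Matrix.mul_assoc Aᵀ, hswap, Matrix.one_mul, h]

theorem card_filter_castSucc_lt {n : ℕ} (i : Fin n) :
    Finset.card {s : Fin (n + 1) | i.castSucc < s} = n - i := by
  rw [Finset.filter_lt_eq_Ioi, Fin.card_Ioi, Fin.val_castSucc, Nat.add_sub_cancel]

/-- The vertices of `D_l(a_k)` for `l = k + m + 2`. The chain `c₂, p₁, …, p_{k-1}` is `p 0, p 1, …`
and the chain `c₄, q₁, …, q_{m-1}` is `q 0, q 1, …`, so that each chain starts on the quadrangle. -/
inductive CarterVertex (k m : ℕ)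
  | c₁
  | c₃
  | p (i : Fin k)
  | q (j : Fin m)
  deriving DecidableEq, Fintype

namespace CarterVertex

variable {k m : ℕ}

/-- The number of a vertex in the ordering of the rows of `carterDlakQ`, where `c₂ = p 0` and
`c₄ = q 0` precede the remaining vertices of their chains by a gap. -/
def index : CarterVertex k m → ℕ
  | c₁ => 0
  | c₃ => 2
  | p i => if (i : ℕ) = 0 then 1 else 3 + i
  | q j => if (j : ℕ) = 0 then 3 else k + 2 + j

theorem index_p {i : Fin k} (hi : (i : ℕ) ≠ 0) : (p i : CarterVertex k m).index = 3 + i :=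
  if_neg hi

theorem index_q {j : Fin m} (hj : (j : ℕ) ≠ 0) : (q j : CarterVertex k m).index = k + 2 + j :=
  if_neg hj

theorem index_lt (hk : 0 < k) (hm : 0 < m) (v : CarterVertex k m) : v.index < k + m + 2 := by
  cases v <;> grind [index]

theorem index_injective (hk : 0 < k) : Function.Injective (index : CarterVertex k m → ℕ) := by
  intro v w h
  cases v <;> cases w <;> grind [index]

theorem exists_index_eq (hk : 0 < k) (hm : 0 < m) {n : ℕ} (hn : n < k + m + 2) :
    ∃ v : CarterVertex k m, v.index = n := by
  obtain rfl | rfl | rfl | rfl | ⟨h4, hp⟩ | hq :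
      n = 0 ∨ n = 1 ∨ n = 2 ∨ n = 3 ∨ (4 ≤ n ∧ n < k + 3) ∨ k + 3 ≤ n := by omega
  · exact ⟨c₁, rfl⟩
  · exact ⟨p ⟨0, hk⟩, rfl⟩
  · exact ⟨c₃, rfl⟩
  · exact ⟨q ⟨0, hm⟩, rfl⟩
  · exact ⟨p ⟨n - 3, by omega⟩, by grind [index]⟩
  · exact ⟨q ⟨n - (k + 2), by omega⟩, by grind [index]⟩

/-- The numbering of the vertices as a bijection onto the index type of `carterDlakQ`. -/
noncomputable def indexEquiv (hk : 0 < k) (hm : 0 < m) : CarterVertex k m ≃ Fin (k + m + 2) :=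
  Equiv.ofBijective (fun v => ⟨v.index, v.index_lt hk hm⟩)
    ⟨fun _ _ h => index_injective hk (Fin.ext_iff.mp h),
      fun n => (exists_index_eq hk hm n.isLt).imp fun _ h => Fin.ext h⟩

theorem val_indexEquiv (hk : 0 < k) (hm : 0 < m) (v : CarterVertex k m) :
    (indexEquiv hk hm v : ℕ) = v.index :=
  rfl

/-- The root of `D_l` at a vertex, in coordinates `ε₀, …, ε_k, η₀, …, η_m` of `ℚ ^ l`. -/
def root : CarterVertex k m → Fin (k + 1) ⊕ Fin (m + 1) → ℚ
  | c₁ => Pi.single (.inl 0) 1 - Pi.single (.inr 0) 1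
  | c₃ => Pi.single (.inl 0) 1 + Pi.single (.inr 0) 1
  | p i => Pi.single (.inl i.succ) 1 - Pi.single (.inl i.castSucc) 1
  | q j => Pi.single (.inr j.succ) 1 - Pi.single (.inr j.castSucc) 1

/-- The basis of `ℚ ^ l` dual to the roots: two half-spin weights at `c₁` and `c₃`, and the sums
`ε_{i+1} + ⋯ + ε_k` and `η_{j+1} + ⋯ + η_m` along the chains. -/
def weight : CarterVertex k m → Fin (k + 1) ⊕ Fin (m + 1) → ℚ
  | c₁ => Sum.elim (fun _ => 1 / 2) (fun _ => -1 / 2)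
  | c₃ => fun _ => 1 / 2
  | p i => Sum.elim (fun s => if i.castSucc < s then 1 else 0) 0
  | q j => Sum.elim 0 (fun s => if j.castSucc < s then 1 else 0)

/-- The matrix whose rows are the roots of the diagram. -/
def rootMatrix (k m : ℕ) : Matrix (CarterVertex k m) (Fin (k + 1) ⊕ Fin (m + 1)) ℚ :=
  of root

/-- The matrix whose rows are the weights dual to the rows of `rootMatrix`. -/
def weightMatrix (k m : ℕ) : Matrix (CarterVertex k m) (Fin (k + 1) ⊕ Fin (m + 1)) ℚ :=
  of weight

theorem weight_c₁_dotProduct_self :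
    weight (c₁ : CarterVertex k m) ⬝ᵥ weight c₁ = (k + m + 2) / 4 := by
  simp only [weight, dotProduct, Fintype.sum_sum_type, Sum.elim_inl, Sum.elim_inr,
    Finset.sum_const, Finset.card_univ, Fintype.card_fin, nsmul_eq_mul, Nat.cast_succ]
  ring

theorem weight_c₃_dotProduct_self :
    weight (c₃ : CarterVertex k m) ⬝ᵥ weight c₃ = (k + m + 2) / 4 := by
  simp only [weight, dotProduct, Finset.sum_const, Finset.card_univ, Fintype.card_sum,
    Fintype.card_fin, nsmul_eq_mul, Nat.cast_add, Nat.cast_one]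
  ring

theorem weight_p_dotProduct_self (i : Fin k) :
    weight (p i : CarterVertex k m) ⬝ᵥ weight (p i) = k - i := by
  simp [weight, dotProduct, ← ite_and, card_filter_castSucc_lt, Nat.cast_sub i.isLt.le]

theorem weight_q_dotProduct_self (j : Fin m) :
    weight (q j : CarterVertex k m) ⬝ᵥ weight (q j) = m - j := by
  simp [weight, dotProduct, ← ite_and, card_filter_castSucc_lt, Nat.cast_sub j.isLt.le]

theorem root_dotProduct_weight (v w : CarterVertex k m) :
    root v ⬝ᵥ weight w = if v = w then 1 else 0 := by
  cases v <;> cases w <;>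
    simp only [root, weight, sub_dotProduct, add_dotProduct, single_one_dotProduct,
      Sum.elim_inl, Sum.elim_inr, Pi.zero_apply] <;>
    grind

theorem rootMatrix_mul_weightMatrix_transpose : rootMatrix k m * (weightMatrix k m)ᵀ = 1 := by
  ext v w
  exact (root_dotProduct_weight v w).trans (one_apply ..).symm

theorem root_dotProduct_root (hk : 0 < k) (hm : 0 < m) (v w : CarterVertex k m) :
    root v ⬝ᵥ root w = carterDlakQ (k + m + 2) k (indexEquiv hk hm v) (indexEquiv hk hm w) := by
  cases v <;> cases w <;>
    simp only [root, sub_dotProduct, add_dotProduct, single_one_dotProduct, Pi.add_apply,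
      Pi.sub_apply, Pi.single_apply, carterDlakQ, val_indexEquiv, index, Sum.inl.injEq,
      Sum.inr.injEq, reduceCtorEq, if_false, Fin.ext_iff, Fin.val_succ, Fin.val_castSucc,
      Fin.val_zero, min_def, max_def] <;>
    grind (splits := 40)

theorem submatrix_carterDlakQ (hk : 0 < k) (hm : 0 < m) :
    (carterDlakQ (k + m + 2) k).submatrix (indexEquiv hk hm) (indexEquiv hk hm) =
      rootMatrix k m * (rootMatrix k m)ᵀ := by
  ext v w
  exact (root_dotProduct_root hk hm v w).symm

theorem submatrix_carterDlakQ_mul (hk : 0 < k) (hm : 0 < m) :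
    (carterDlakQ (k + m + 2) k).submatrix (indexEquiv hk hm) (indexEquiv hk hm) *
      (weightMatrix k m * (weightMatrix k m)ᵀ) = 1 := by
  have hcard : Fintype.card (CarterVertex k m) = Fintype.card (Fin (k + 1) ⊕ Fin (m + 1)) := by
    rw [Fintype.card_congr (indexEquiv hk hm)]
    simp only [Fintype.card_sum, Fintype.card_fin]
    omega
  rw [submatrix_carterDlakQ]
  exact mul_transpose_mul_mul_transpose_eq_one hcard rootMatrix_mul_weightMatrix_transpose

theorem isUnit_det_carterDlakQ (hk : 0 < k) (hm : 0 < m) :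
    IsUnit (carterDlakQ (k + m + 2) k).det := by
  rw [← det_submatrix_equiv_self (indexEquiv hk hm)]
  exact isUnit_det_of_right_inverse (submatrix_carterDlakQ_mul hk hm)

theorem inv_carterDlakQ_apply_self (hk : 0 < k) (hm : 0 < m) (v : CarterVertex k m)
    {n : Fin (k + m + 2)} (hn : v.index = n) :
    (carterDlakQ (k + m + 2) k)⁻¹ n n = weight v ⬝ᵥ weight v := by
  obtain rfl : indexEquiv hk hm v = n := Fin.ext hn
  have hinv := inv_eq_right_inv (submatrix_carterDlakQ_mul hk hm)
  rw [inv_submatrix_equiv] at hinv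
  exact congrFun (congrFun hinv v) v

end CarterVertex

/-- The partial Cartan matrix of `D_l(a_k)` is invertible over `ℚ`, and the diagonal
entries of its inverse are: `l/4` at `c₁` and `c₃`; `k` at `c₂`; `l - k - 2` at `c₄`;
`k - i` at `pᵢ` (`1 ≤ i ≤ k - 1`); and `l - k - 2 - j` at `qⱼ` (`1 ≤ j ≤ l - k - 3`). -/
theorem inv_carterDlak_diag (l k : ℕ) (hl : 4 ≤ l) (hk1 : 1 ≤ k) (hk2 : k ≤ l - 3) :
    IsUnit (carterDlakQ l k).det ∧
    (carterDlakQ l k)⁻¹ ⟨0, by omega⟩ ⟨0, by omega⟩ = (l : ℚ) / 4 ∧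
    (carterDlakQ l k)⁻¹ ⟨2, by omega⟩ ⟨2, by omega⟩ = (l : ℚ) / 4 ∧
    (carterDlakQ l k)⁻¹ ⟨1, by omega⟩ ⟨1, by omega⟩ = (k : ℚ) ∧
    (carterDlakQ l k)⁻¹ ⟨3, by omega⟩ ⟨3, by omega⟩ = (l : ℚ) - (k : ℚ) - 2 ∧
    (∀ (i : ℕ) (hi1 : 1 ≤ i) (hi2 : i ≤ k - 1),
      (carterDlakQ l k)⁻¹ ⟨3 + i, by omega⟩ ⟨3 + i, by omega⟩ = (k : ℚ) - (i : ℚ)) ∧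
    (∀ (j : ℕ) (hj1 : 1 ≤ j) (hj2 : j ≤ l - k - 3),
      (carterDlakQ l k)⁻¹ ⟨k + 2 + j, by omega⟩ ⟨k + 2 + j, by omega⟩
        = (l : ℚ) - (k : ℚ) - 2 - (j : ℚ)) := by
  obtain ⟨m, rfl⟩ : ∃ m, l = k + m + 2 := ⟨l - k - 2, by omega⟩
  have hm : 0 < m := by omega
  have entry := CarterVertex.inv_carterDlakQ_apply_self hk1 hm
  push_cast
  refine ⟨CarterVertex.isUnit_det_carterDlakQ hk1 hm, ?_, ?_, ?_, ?_, fun i hi1 hi2 => ?_,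
    fun j hj1 hj2 => ?_⟩
  · rw [entry .c₁ rfl, CarterVertex.weight_c₁_dotProduct_self]
  · rw [entry .c₃ rfl, CarterVertex.weight_c₃_dotProduct_self]
  · rw [entry (.p ⟨0, hk1⟩) rfl, CarterVertex.weight_p_dotProduct_self]
    simp
  · rw [entry (.q ⟨0, hm⟩) rfl, CarterVertex.weight_q_dotProduct_self]
    simp only [Nat.cast_zero]
    ring
  · rw [entry (.p ⟨i, by omega⟩) (CarterVertex.index_p (Nat.one_le_iff_ne_zero.mp hi1)),
      CarterVertex.weight_p_dotProduct_self]
  · rw [entry (.q ⟨j, by omega⟩) (CarterVertex.index_q (Nat.one_le_iff_ne_zero.mp hj1)),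
      CarterVertex.weight_q_dotProduct_self]
    ring
end

section
/- In ℝ^6, let C_1 = {e_1+e_2, e_4−e_1, e_1−e_2, e_2−e_3} and C_2 = {e_1+e_2, e_4−e_1, e_3−e_4, e_2−e_3}. Then no element T of the group of linear maps generated by the reflections s_v for v ∈ Φ(D_6) maps the set C_1 onto the set C_2. In particular, the root subsets C_1 and C_2 are non-conjugate under the Weyl group W(D_6), even though both realize the Carter diagram D_4(a_1) and their associated Weyl group elements are conjugate. -/
open RealInnerProductSpace

/-- The reflection in the hyperplane orthogonal to `v` in `ℝ⁶`:
`x ↦ x - (2⟪x, v⟫ / ⟪v, v⟫) • v`. -/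
noncomputable def reflD6 (v : EuclideanSpace ℝ (Fin 6)) :
    EuclideanSpace ℝ (Fin 6) → EuclideanSpace ℝ (Fin 6) :=
  fun x => x - ((2 * ⟪x, v⟫ / ⟪v, v⟫ : ℝ)) • v

/-- The standard basis vector `e_i` of `ℝ⁶` (here `i` runs over `0, …, 5`,
corresponding to `e_1, …, e_6`). -/
noncomputable def ee (i : Fin 6) : EuclideanSpace ℝ (Fin 6) :=
  EuclideanSpace.single i (1 : ℝ)

/-- The root system `D₆`: the vectors `±e_i ± e_j` with `i < j` in `ℝ⁶`. -/
def PhiD6 : Set (EuclideanSpace ℝ (Fin 6)) :=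
  {x | ∃ i j : Fin 6, i < j ∧
    (x = EuclideanSpace.single i (1 : ℝ) + EuclideanSpace.single j (1 : ℝ) ∨
     x = EuclideanSpace.single i (1 : ℝ) - EuclideanSpace.single j (1 : ℝ) ∨
     x = -EuclideanSpace.single i (1 : ℝ) + EuclideanSpace.single j (1 : ℝ) ∨
     x = -EuclideanSpace.single i (1 : ℝ) - EuclideanSpace.single j (1 : ℝ))}

/-- `C₁ = {e₁+e₂, e₄−e₁, e₁−e₂, e₂−e₃}`. -/
noncomputable def Cone : Set (EuclideanSpace ℝ (Fin 6)) :=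
  {ee 0 + ee 1, ee 3 - ee 0, ee 0 - ee 1, ee 1 - ee 2}

/-- `C₂ = {e₁+e₂, e₄−e₁, e₃−e₄, e₂−e₃}`. -/
noncomputable def Ctwo : Set (EuclideanSpace ℝ (Fin 6)) :=
  {ee 0 + ee 1, ee 3 - ee 0, ee 2 - ee 3, ee 1 - ee 2}

/-! Every element of `W(D₆)` is an additive map preserving the lattice `2ℤ⁶`: for a root `v` and
`x ∈ 2ℤ⁶` the reflection subtracts `⟪x, v⟫ • v`, with `⟪x, v⟫` an even integer and `v` integral.
Such a map acts on `ℝ⁶ / 2ℤ⁶`, so it cannot increase the number of classes met by a set.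
In this quotient the two elements `e₁ ± e₂` of `C₁` coincide, so `C₁` meets at most three
classes, whereas `C₂` reduces to the four distinct edges `e_i + e_j` of the cycle `1-2-3-4`. -/

theorem encard_image_mk_image_le {G H : Type*} [AddGroup G] [AddGroup H]
    {N : AddSubgroup G} [N.Normal] {M : AddSubgroup H} [M.Normal] {f : G →+ H}
    (hf : N ≤ M.comap f) (s : Set G) :
    ((QuotientAddGroup.mk : H → H ⧸ M) '' (f '' s)).encard ≤
      ((QuotientAddGroup.mk : G → G ⧸ N) '' s).encard := by
  have hfactor : (QuotientAddGroup.mk : H → H ⧸ M) '' (f '' s) =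
      QuotientAddGroup.map N M f hf '' (QuotientAddGroup.mk '' s) := by
    simp only [Set.image_image, QuotientAddGroup.map_mk]
  rw [hfactor]
  exact Set.encard_image_le _ _

theorem mul_mem_zmultiples_mul {R : Type*} [NonUnitalNonAssocRing R] {a b c d : R}
    (ha : a ∈ AddSubgroup.zmultiples c) (hb : b ∈ AddSubgroup.zmultiples d) :
    a * b ∈ AddSubgroup.zmultiples (c * d) := by
  obtain ⟨m, rfl⟩ := ha
  obtain ⟨n, rfl⟩ := hb
  exact ⟨m * n, (smul_mul_smul_comm m c n d).symm⟩

theorem reflection_orthogonal_singleton_apply {E : Type*} [NormedAddCommGroup E]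
    [InnerProductSpace ℝ E] (v x : E) :
    (ℝ ∙ v)ᗮ.reflection x = x - (2 * ⟪x, v⟫ / ⟪v, v⟫) • v := by
  rw [Submodule.reflection_orthogonal_apply, Submodule.reflection_singleton_apply,
    RCLike.ofReal_real_eq_id, id_eq, ← real_inner_self_eq_norm_sq, real_inner_comm]
  module

/-- The lattice `cℤ^ι` of vectors all of whose coordinates are integer multiples of `c`, as an
additive subgroup of `ℝ^ι`; `c = 1` gives the integral vectors and `c = 2` the even ones. -/
def scaledIntegerLattice (ι : Type*) (c : ℝ) : AddSubgroup (EuclideanSpace ℝ ι) where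
  carrier := {x | ∀ i, x i ∈ AddSubgroup.zmultiples c}
  add_mem' hx hy i := add_mem (hx i) (hy i)
  zero_mem' _ := zero_mem _
  neg_mem' hx i := neg_mem (hx i)

namespace scaledIntegerLattice

variable {ι : Type*} {c d : ℝ} {x y v : EuclideanSpace ℝ ι}

theorem smul_mem {a : ℝ} (ha : a ∈ AddSubgroup.zmultiples c)
    (hv : v ∈ scaledIntegerLattice ι d) : a • v ∈ scaledIntegerLattice ι (c * d) :=
  fun i => mul_mem_zmultiples_mul ha (hv i)

theorem single_mem [DecidableEq ι] (i : ι) :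
    EuclideanSpace.single i c ∈ scaledIntegerLattice ι c := by
  intro j
  rw [PiLp.single_apply]
  split_ifs
  · exact AddSubgroup.mem_zmultiples c
  · exact zero_mem _

theorem mk_ne_mk_of_abs_sub_lt {i : ι} (hne : x i ≠ y i) (hlt : |x i - y i| < |c|) :
    (x : EuclideanSpace ℝ ι ⧸ scaledIntegerLattice ι c) ≠ y := by
  rw [Ne, QuotientAddGroup.eq_iff_sub_mem]
  intro hmem
  obtain ⟨n, hn : n • c = x i - y i⟩ := hmem i
  have hn0 : n ≠ 0 := by
    rintro rfl
    exact hne (sub_eq_zero.mp (by rw [← hn, zero_smul]))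
  have hone_le : (1 : ℝ) ≤ |(n : ℝ)| := by exact_mod_cast Int.one_le_abs hn0
  rw [← hn, zsmul_eq_mul, abs_mul] at hlt
  exact hlt.not_ge (le_mul_of_one_le_left (abs_nonneg c) hone_le)

variable [Fintype ι]

theorem inner_mem (hx : x ∈ scaledIntegerLattice ι c) (hy : y ∈ scaledIntegerLattice ι d) :
    ⟪x, y⟫ ∈ AddSubgroup.zmultiples (c * d) := by
  rw [PiLp.inner_apply, mul_comm c d]
  exact sum_mem fun i _ => mul_mem_zmultiples_mul (hy i) (hx i)

theorem reflection_mem (hv : v ∈ scaledIntegerLattice ι 1) (hvv : ⟪v, v⟫ = 2)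
    (hx : x ∈ scaledIntegerLattice ι c) :
    (ℝ ∙ v)ᗮ.reflection x ∈ scaledIntegerLattice ι c := by
  have hcoeff : ⟪x, v⟫ ∈ AddSubgroup.zmultiples c := by simpa only [mul_one] using inner_mem hx hv
  have hsmul : ⟪x, v⟫ • v ∈ scaledIntegerLattice ι c := by
    simpa only [mul_one] using smul_mem hcoeff hv
  have hrefl : (ℝ ∙ v)ᗮ.reflection x = x - ⟪x, v⟫ • v := by
    rw [reflection_orthogonal_singleton_apply, hvv, mul_div_cancel_left₀ _ two_ne_zero]
  rw [hrefl]
  exact sub_mem hx hsmul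

end scaledIntegerLattice

theorem reflD6_eq_reflection (v : EuclideanSpace ℝ (Fin 6)) :
    reflD6 v = (ℝ ∙ v)ᗮ.reflection :=
  funext fun x => (reflection_orthogonal_singleton_apply v x).symm

theorem mem_scaledIntegerLattice_one_of_mem_PhiD6 {v : EuclideanSpace ℝ (Fin 6)}
    (hv : v ∈ PhiD6) : v ∈ scaledIntegerLattice (Fin 6) 1 := by
  have he (i : Fin 6) : EuclideanSpace.single i 1 ∈ scaledIntegerLattice (Fin 6) 1 :=
    scaledIntegerLattice.single_mem i
  obtain ⟨i, j, -, rfl | rfl | rfl | rfl⟩ := hv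
  · exact add_mem (he i) (he j)
  · exact sub_mem (he i) (he j)
  · exact add_mem (neg_mem (he i)) (he j)
  · exact sub_mem (neg_mem (he i)) (he j)

theorem inner_self_of_mem_PhiD6 {v : EuclideanSpace ℝ (Fin 6)} (hv : v ∈ PhiD6) :
    ⟪v, v⟫ = 2 := by
  obtain ⟨i, j, hij, rfl | rfl | rfl | rfl⟩ := hv <;>
    norm_num [-inner_self_eq_norm_sq_to_K,
      inner_add_left, inner_sub_left, EuclideanSpace.inner_single_left, hij.ne, hij.ne']

theorem exists_addMonoidHom_of_mem_closure_reflD6 {T : Function.End (EuclideanSpace ℝ (Fin 6))}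
    (hT : T ∈ Submonoid.closure
      {g : Function.End (EuclideanSpace ℝ (Fin 6)) | ∃ v ∈ PhiD6, g = reflD6 v}) (c : ℝ) :
    ∃ f : EuclideanSpace ℝ (Fin 6) →+ EuclideanSpace ℝ (Fin 6),
      scaledIntegerLattice (Fin 6) c ≤ (scaledIntegerLattice (Fin 6) c).comap f ∧ ⇑f = T := by
  induction hT using Submonoid.closure_induction with
  | mem g hg =>
    obtain ⟨v, hv, rfl⟩ := hg
    refine ⟨(ℝ ∙ v)ᗮ.reflection.toLinearEquiv.toAddEquiv.toAddMonoidHom, fun x hx => ?_,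
      (reflD6_eq_reflection v).symm⟩
    exact scaledIntegerLattice.reflection_mem (mem_scaledIntegerLattice_one_of_mem_PhiD6 hv)
      (inner_self_of_mem_PhiD6 hv) hx
  | one => exact ⟨AddMonoidHom.id _, le_rfl, rfl⟩
  | mul S T _ _ hS hT =>
    obtain ⟨f, hf, rfl⟩ := hS
    obtain ⟨g, hg, rfl⟩ := hT
    exact ⟨f.comp g, fun x hx => hf (hg hx), rfl⟩

theorem mk_ee_add_ee_eq_mk_ee_sub_ee (i j : Fin 6) :
    ((ee i + ee j : EuclideanSpace ℝ (Fin 6)) :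
        EuclideanSpace ℝ (Fin 6) ⧸ scaledIntegerLattice (Fin 6) 2) =
      (ee i - ee j : EuclideanSpace ℝ (Fin 6)) := by
  have hdiff : (ee i + ee j) - (ee i - ee j) = EuclideanSpace.single j 2 := by
    ext k
    by_cases hk : k = j <;> norm_num [ee, hk]
  rw [QuotientAddGroup.eq_iff_sub_mem, hdiff]
  exact scaledIntegerLattice.single_mem j

theorem encard_image_mk_Cone_le :
    ((QuotientAddGroup.mk :
      _ → EuclideanSpace ℝ (Fin 6) ⧸ scaledIntegerLattice (Fin 6) 2) '' Cone).encard ≤ 3 := by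
  rw [Cone, Set.insert_comm, Set.image_insert_eq, Set.image_insert_eq, Set.image_pair,
    mk_ee_add_ee_eq_mk_ee_sub_ee, Set.insert_eq_of_mem (Set.mem_insert _ _)]
  grw [Set.encard_insert_le, Set.encard_insert_le, Set.encard_singleton]
  norm_num

theorem encard_image_mk_Ctwo :
    ((QuotientAddGroup.mk :
      _ → EuclideanSpace ℝ (Fin 6) ⧸ scaledIntegerLattice (Fin 6) 2) '' Ctwo).encard = 4 := by
  have hmk {x y : EuclideanSpace ℝ (Fin 6)} (i : Fin 6) (hxy : |x i - y i| = 1) :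
      (x : EuclideanSpace ℝ (Fin 6) ⧸ scaledIntegerLattice (Fin 6) 2) ≠ y :=
    scaledIntegerLattice.mk_ne_mk_of_abs_sub_lt (i := i)
      (fun h => by simp [h] at hxy) (by norm_num [hxy])
  simp only [Ctwo, Set.image_insert_eq, Set.image_singleton]
  rw [Set.encard_insert_of_notMem, Set.encard_insert_of_notMem, Set.encard_pair]
  · norm_num
  · exact hmk 1 (by simp [ee])
  · rintro (h | h)
    · exact hmk 0 (by simp [ee]) h
    · exact hmk 0 (by simp [ee]) h
  · rintro (h | h | h)
    · exact hmk 1 (by simp [ee]) h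
    · exact hmk 0 (by simp [ee]) h
    · exact hmk 0 (by simp [ee]) h

theorem C1_not_conjugate_C2_general
    {f : EuclideanSpace ℝ (Fin 6) →+ EuclideanSpace ℝ (Fin 6)}
    (hf : scaledIntegerLattice (Fin 6) 2 ≤ (scaledIntegerLattice (Fin 6) 2).comap f) :
    f '' Cone ≠ Ctwo := by
  intro h
  have hle : (4 : ℕ∞) ≤ 3 :=
    calc
      4 = (QuotientAddGroup.mk '' (f '' Cone)).encard := by rw [h, encard_image_mk_Ctwo]
      _ ≤ (QuotientAddGroup.mk '' Cone).encard := encard_image_mk_image_le hf Cone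
      _ ≤ 3 := encard_image_mk_Cone_le
  exact absurd hle (by norm_num)

/-- No element of the Weyl group `W(D₆)` — the group of linear maps generated by the
reflections `s_v` for `v ∈ Φ(D₆)`, which coincides with the monoid generated by
these involutive reflections inside `Function.End (ℝ⁶)` — maps the root subset `C₁`
onto the root subset `C₂`. -/
theorem C1_not_conjugate_C2 :
    ∀ T ∈ Submonoid.closure
        {g : Function.End (EuclideanSpace ℝ (Fin 6)) | ∃ v ∈ PhiD6, g = reflD6 v},
      T '' Cone ≠ Ctwo := by
  intro T hT
  obtain ⟨f, hf, rfl⟩ := exists_addMonoidHom_of_mem_closure_reflD6 hT 2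
  exact C1_not_conjugate_C2_general hf
end
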